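/- Suppose a Tychonoff space X ℓ-dominates a Tychonoff space Y, and X is a k_ω space. Then Y is a k_ω space if and only if Y is a μ-space. -/

import Mathlib

open Set Function

noncomputable section

/-- Topology of pointwise convergence on `C(X, ℝ)`. -/
def ptTop (X : Type*) [TopologicalSpace X] : TopologicalSpace C(X, ℝ) :=
  TopologicalSpace.induced (fun f => (f : X → ℝ)) Pi.topologicalSpace

/-- `X` ℓ-dominates `Y`: a continuous linear map of `C_p(X)` onto `C_p(Y)`. -/
def LDominates (X Y : Type*) [TopologicalSpace X] [TopologicalSpace Y] : Prop :=
  ∃ L : C(X, ℝ) →ₗ[ℝ] C(Y, ℝ), @Continuous _ _ (ptTop X) (ptTop Y) L ∧ Surjective L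

/-- Covering dimension at most `n`. -/
def CovDimLE (X : Type*) [TopologicalSpace X] (n : ℕ) : Prop :=
  ∀ (ι : Type) (U : ι → Set X), Finite ι → (∀ i, IsOpen (U i)) → (⋃ i, U i) = univ →
    ∃ V : ι → Set X, (∀ i, IsOpen (V i)) ∧ (∀ i, V i ⊆ U i) ∧ (⋃ i, V i) = univ ∧
      ∀ x : X, {i | x ∈ V i}.ncard ≤ n + 1

/-- Finite (covering) dimensional space. -/
def FinDimSpace (X : Type*) [TopologicalSpace X] : Prop := ∃ n : ℕ, CovDimLE X n

/-- Strongly countable dimensional space. -/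
def StronglyCountableDim (X : Type*) [TopologicalSpace X] : Prop :=
  ∃ F : ℕ → Set X, (∀ n, IsClosed (F n)) ∧ (∀ n, FinDimSpace ↥(F n)) ∧ (⋃ n, F n) = univ

/-- `I(S)` relative to a subset: points of `S` with a relatively open
finite dimensional neighbourhood in `S`. -/
def fdI (X : Type*) [TopologicalSpace X] (S : Set X) : Set X :=
  {x | x ∈ S ∧ ∃ U : Set X, IsOpen U ∧ x ∈ U ∧ FinDimSpace ↥(U ∩ S)}

/-- The transfinite derived sets `K^[α]`. -/
def fdDerived (X : Type*) [TopologicalSpace X] : Ordinal → Set X := fun o =>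
  Ordinal.limitRecOn o (univ : Set X)
    (fun _ S => S \ fdI X S)
    (fun o _ ih => ⋂ (o' : Ordinal) (h : o' < o), ih o' h)

/-- A k_ω sequence for `X`. -/
def IsKOmegaSeq (X : Type*) [TopologicalSpace X] (K : ℕ → Set X) : Prop :=
  (∀ n, IsCompact (K n)) ∧ (∀ n, K n ⊆ K (n + 1)) ∧
  (∀ C : Set X, IsCompact C → ∃ n, C ⊆ K n) ∧
  (∀ A : Set X, (∀ n, ∃ F : Set X, IsClosed F ∧ A ∩ K n = F ∩ K n) → IsClosed A)

def KOmegaSpace (X : Type*) [TopologicalSpace X] : Prop := ∃ K : ℕ → Set X, IsKOmegaSeq X K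

/-- Submetrizable: there is a coarser metrizable topology. -/
def Submetrizable (X : Type*) [TopologicalSpace X] : Prop :=
  ∃ t' : TopologicalSpace X, (∀ s : Set X, @IsOpen X t' s → IsOpen s) ∧
    @TopologicalSpace.MetrizableSpace X t'

def Hemicompact (X : Type*) [TopologicalSpace X] : Prop :=
  ∃ K : ℕ → Set X, (∀ n, IsCompact (K n)) ∧ ∀ C : Set X, IsCompact C → ∃ n, C ⊆ K n

/-- `B` is (functionally) bounded in `X`. -/
def CBounded (X : Type*) [TopologicalSpace X] (B : Set X) : Prop :=
  ∀ f : C(X, ℝ), ∃ M : ℝ, ∀ x ∈ B, |f x| ≤ M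

/-- μ-space: closed bounded subsets are compact. -/
def MuSpace (X : Type*) [TopologicalSpace X] : Prop :=
  ∀ B : Set X, IsClosed B → CBounded X B → IsCompact B

/-- `C(K; A)`: continuous functions vanishing on `A`, as a submodule. -/
def Czero (K : Type*) [TopologicalSpace K] (A : Set K) : Submodule ℝ C(K, ℝ) where
  carrier := {f | ∀ x ∈ A, f x = 0}
  add_mem' := by intro f g hf hg x hx; simp [hf x hx, hg x hx]
  zero_mem' := by intro x hx; simp
  smul_mem' := by intro c f hf x hx; simp [hf x hx]

/-- Pointwise topology on `C(K;A)`. -/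
def ptTopSub {K : Type*} [TopologicalSpace K] (A : Set K) :
    TopologicalSpace (Czero K A) :=
  TopologicalSpace.induced (fun f => (f : C(K, ℝ))) (ptTop K)

/-- `c`-good map between relative function spaces. -/
def IsCGood {K₁ K₂ : Type*} [TopologicalSpace K₁] [CompactSpace K₁]
    [TopologicalSpace K₂] [CompactSpace K₂] (A₁ : Set K₁) (A₂ : Set K₂) (c : ℝ)
    (L : Czero K₁ A₁ →ₗ[ℝ] Czero K₂ A₂) : Prop :=
  @Continuous _ _ (ptTopSub A₁) (ptTopSub A₂) L ∧
  (∀ g : Czero K₁ A₁, ‖(L g : C(K₂, ℝ))‖ ≤ ‖(g : C(K₁, ℝ))‖) ∧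
  (∀ f : Czero K₂ A₂, ∃ g : Czero K₁ A₁, L g = f ∧
    ‖(g : C(K₁, ℝ))‖ ≤ c * ‖(f : C(K₂, ℝ))‖)

/-- `c`-good map between full function spaces. -/
def IsCGoodMap {K₁ K₂ : Type*} [TopologicalSpace K₁] [CompactSpace K₁]
    [TopologicalSpace K₂] [CompactSpace K₂] (c : ℝ)
    (L : C(K₁, ℝ) →ₗ[ℝ] C(K₂, ℝ)) : Prop :=
  @Continuous _ _ (ptTop K₁) (ptTop K₂) L ∧
  (∀ g : C(K₁, ℝ), ‖L g‖ ≤ ‖g‖) ∧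
  (∀ f : C(K₂, ℝ), ∃ g : C(K₁, ℝ), L g = f ∧ ‖g‖ ≤ c * ‖f‖)

/-!
Give `C(X, ℝ)` and `C(Y, ℝ)` the compact-open topology. Since `X` is a k_ω space, `C(X, ℝ)` is a
Fréchet space; in particular it is barrelled, so the uniform boundedness principle upgrades a
pointwise continuous linear surjection `L : C(X, ℝ) → C(Y, ℝ)` to a continuous one. If `Y` is a
μ-space, then `C(Y, ℝ)` is barrelled as well (Nachbin–Shirota): a lower semicontinuous seminorm has
a functionally bounded support, and it is dominated by the supremum norm over this support. By
Pták's open mapping theorem `L` is open, whence `C(Y, ℝ)` is first countable and complete.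
First countability makes `Y` hemicompact; completeness allows gluing functions defined step by step
on an exhausting sequence of compact sets, so this sequence determines the closed sets.

Conversely, a k_ω space is Lindelöf, and a completely regular Lindelöf space is a μ-space.
-/

open Topology Filter Uniformity UniformConvergence
open scoped Pointwise

section OpenMapping

theorem lowerSemicontinuous_gauge_of_isClosed {E : Type*} [AddCommGroup E] [Module ℝ E]
    [TopologicalSpace E] [ContinuousConstSMul ℝ E] {s : Set E} (hclosed : IsClosed s)
    (hconvex : Convex ℝ s) (hzero : 0 ∈ s) (habs : Absorbent ℝ s) :
    LowerSemicontinuous (gauge s) := by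
  refine lowerSemicontinuous_iff_isClosed_preimage.2 fun a => ?_
  rcases lt_or_ge a 0 with ha | ha
  · convert! isClosed_empty
    exact eq_empty_of_forall_notMem fun x hx => (ha.trans_le (gauge_nonneg x)).not_ge hx
  · change IsClosed {x | gauge s x ≤ a}
    rw [setOfPred_gauge_le_eq hconvex hzero habs ha]
    exact isClosed_iInter fun r => isClosed_iInter fun hr =>
      hclosed.smul_of_ne_zero (ha.trans_lt hr).ne'

theorem mem_nhds_zero_of_isClosed_absConvex_absorbent {E : Type*} [AddCommGroup E] [Module ℝ E]
    [TopologicalSpace E] [ContinuousSMul ℝ E] [BarrelledSpace ℝ E] {s : Set E}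
    (hclosed : IsClosed s) (hconvex : AbsConvex ℝ s) (habs : Absorbent ℝ s) : s ∈ 𝓝 0 := by
  have hzero : (0 : E) ∈ s := habs.zero_mem
  have hcont : Continuous (gaugeSeminorm (𝕜 := ℝ) hconvex.1 hconvex.2 habs) :=
    Seminorm.continuous_of_lowerSemicontinuous _
      (lowerSemicontinuous_gauge_of_isClosed hclosed hconvex.2 hzero habs)
  have hball : {x | gauge s x < 1} ∈ 𝓝 (0 : E) :=
    (isOpen_Iio.preimage hcont).mem_nhds (by simp [gaugeSeminorm_toFun])
  filter_upwards [hball] with x hx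
  exact hclosed.closure_eq ▸ mem_closure_of_gauge_le_one hconvex.2 hzero habs hx.le

theorem absConvex_image {E F : Type*} [AddCommGroup E] [Module ℝ E] [AddCommGroup F] [Module ℝ F]
    {s : Set E} (hs : AbsConvex ℝ s) (f : E →ₗ[ℝ] F) : AbsConvex ℝ (f '' s) := by
  refine ⟨fun a ha => ?_, hs.2.linear_image f⟩
  rw [← image_smul_set]
  exact image_mono (hs.1 a ha)

theorem absorbent_image {E F : Type*} [AddCommGroup E] [Module ℝ E] [AddCommGroup F] [Module ℝ F]
    {s : Set E} (hs : Absorbent ℝ s) {f : E →ₗ[ℝ] F} (hf : Surjective f) :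
    Absorbent ℝ (f '' s) := by
  intro y
  obtain ⟨x, rfl⟩ := hf y
  filter_upwards [hs x] with a ha
  rw [← image_smul_set, singleton_subset_iff]
  exact mem_image_of_mem f (singleton_subset_iff.1 ha)

theorem closure_image_mem_nhds_zero_of_surjective {E F : Type*} [AddCommGroup E] [Module ℝ E]
    [TopologicalSpace E] [ContinuousSMul ℝ E] [LocallyConvexSpace ℝ E]
    [AddCommGroup F] [Module ℝ F] [TopologicalSpace F] [IsTopologicalAddGroup F]
    [ContinuousSMul ℝ F] [BarrelledSpace ℝ F] {f : E →ₗ[ℝ] F} (hf : Surjective f)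
    {V : Set E} (hV : V ∈ 𝓝 0) : closure (f '' V) ∈ 𝓝 0 := by
  obtain ⟨W, ⟨hW, hWconvex⟩, hWV⟩ := (nhds_hasBasis_absConvex ℝ E).mem_iff.1 hV
  refine mem_of_superset ?_ (closure_mono (image_mono hWV))
  exact mem_nhds_zero_of_isClosed_absConvex_absorbent isClosed_closure
    (absConvex_image hWconvex f).closure
    ((absorbent_image (absorbent_nhds_zero hW) hf).mono subset_closure)

theorem add_sub_mem_of_succ_sub_mem {E : Type*} [AddCommGroup E] {U : ℕ → Set E}
    (hzero : ∀ n, 0 ∈ U n) (hadd : ∀ n, U (n + 1) + U (n + 1) ⊆ U n) {s : ℕ → E}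
    (hs : ∀ n, s (n + 1) - s n ∈ U (n + 1)) (n k : ℕ) : s (n + k) - s n ∈ U n := by
  induction k generalizing n with
  | zero => simpa using hzero n
  | succ k ih =>
    have h := hadd n (add_mem_add (ih (n + 1)) (hs n))
    rwa [sub_add_sub_cancel, add_right_comm] at h

theorem cauchySeq_of_succ_sub_mem {E : Type*} [AddCommGroup E] [UniformSpace E]
    [IsUniformAddGroup E] {U : ℕ → Set E} (hU : (𝓝 (0 : E)).HasAntitoneBasis U)
    (hadd : ∀ n, U (n + 1) + U (n + 1) ⊆ U n) {s : ℕ → E}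
    (hs : ∀ n, s (n + 1) - s n ∈ U (n + 1)) : CauchySeq s := by
  refine (hU.toHasBasis.uniformity_of_nhds_zero_swapped.cauchySeq_iff').2 fun n _ => ⟨n, ?_⟩
  intro m hm
  obtain ⟨k, rfl⟩ := Nat.exists_eq_add_of_le hm
  exact add_sub_mem_of_succ_sub_mem (fun n => mem_of_mem_nhds (hU.mem n)) hadd hs n k

variable {E F : Type*} [AddCommGroup E] [AddCommGroup F]

theorem exists_mem_sub_mem_closure_image [TopologicalSpace F] [IsTopologicalAddGroup F]
    (f : E →+ F) {V W : Set E} (hW : closure (f '' W) ∈ 𝓝 0) {y : F}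
    (hy : y ∈ closure (f '' V)) : ∃ x ∈ V, y - f x ∈ closure (f '' W) := by
  have hnear : {z | y - z ∈ closure (f '' W)} ∈ 𝓝 y := by
    have hcont : ContinuousAt (fun z => y - z) y := by fun_prop
    exact hcont (by simpa using hW)
  obtain ⟨_, hz, x, hx, rfl⟩ := mem_closure_iff_nhds.1 hy _ hnear
  exact ⟨x, hx, hz⟩

theorem exists_seq_sub_mem_closure_image [TopologicalSpace F] [IsTopologicalAddGroup F]
    (f : E →+ F) {U : ℕ → Set E} (hU : ∀ n, closure (f '' U n) ∈ 𝓝 0) {y : F}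
    (hy : y ∈ closure (f '' U 0)) :
    ∃ s : ℕ → E, s 0 = 0 ∧ (∀ n, s (n + 1) - s n ∈ U n) ∧
      ∀ n, y - f (s n) ∈ closure (f '' U n) := by
  choose! g hgU hg using fun n (z : F) =>
    exists_mem_sub_mem_closure_image f (V := U n) (hU (n + 1)) (y := z)
  let s : ℕ → E := fun n => Nat.rec 0 (fun n x => x + g n (y - f x)) n
  have hs : ∀ n, y - f (s n) ∈ closure (f '' U n) := by
    intro n
    induction n with
    | zero => simpa [s] using hy
    | succ n ih => simpa [s, sub_sub] using hg n _ ih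
  exact ⟨s, rfl, fun n => by simpa [s] using hgU n _ (hs n), hs⟩

theorem tendsto_zero_of_mem_closure_image [TopologicalSpace E] [TopologicalSpace F]
    [RegularSpace F] {f : E →+ F} (hf : Continuous f) {U : ℕ → Set E}
    (hU : (𝓝 (0 : E)).HasAntitoneBasis U) {z : ℕ → F}
    (hz : ∀ n, z n ∈ closure (f '' U n)) : Tendsto z atTop (𝓝 0) := by
  refine (closed_nhds_basis (0 : F)).tendsto_right_iff.2 fun W ⟨hW, hWclosed⟩ => ?_
  have hpre : f ⁻¹' W ∈ 𝓝 0 := hf.continuousAt (by simpa using hW)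
  filter_upwards [hU.eventually_subset hpre] with n hn
  exact closure_minimal (image_subset_iff.2 hn) hWclosed (hz n)

theorem isOpenMap_of_closure_image_mem_nhds_zero [UniformSpace E] [IsUniformAddGroup E]
    [CompleteSpace E] [FirstCountableTopology E] [TopologicalSpace F] [IsTopologicalAddGroup F]
    [T2Space F] {f : E →+ F} (hf : Continuous f)
    (h : ∀ V ∈ 𝓝 (0 : E), closure (f '' V) ∈ 𝓝 0) : IsOpenMap f := by
  refine IsTopologicalAddGroup.isOpenMap_iff_nhds_zero.2 fun V hV => ?_
  obtain ⟨W, ⟨hW, hWclosed⟩, hWV⟩ := (closed_nhds_basis (0 : E)).mem_iff.1 (mem_map.1 hV)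
  obtain ⟨U, hU, hadd⟩ := IsTopologicalAddGroup.exists_antitone_basis_nhds_zero E
  obtain ⟨N, hN⟩ := hU.mem_iff.1 hW
  set B : ℕ → Set E := fun n => U (N + n)
  have hB : (𝓝 (0 : E)).HasAntitoneBasis B := hU.comp_strictMono (strictMono_id.const_add N)
  have hB' : (𝓝 (0 : E)).HasAntitoneBasis fun n => B (n + 1) :=
    hB.comp_strictMono (strictMono_id.add_const 1)
  have hBadd : ∀ n, B (n + 1) + B (n + 1) ⊆ B n := fun n => hadd (N + n)
  filter_upwards [h _ (hB.mem 1)] with y hy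
  obtain ⟨s, hs0, hsB, hsy⟩ := exists_seq_sub_mem_closure_image f (fun n => h _ (hB'.mem n)) hy
  obtain ⟨x, hx⟩ := cauchySeq_tendsto_of_complete (cauchySeq_of_succ_sub_mem hB hBadd hsB)
  suffices x ∈ W ∧ f x = y from this.2 ▸ hWV this.1
  constructor
  · refine hWclosed.mem_of_tendsto hx (Eventually.of_forall fun n => hN ?_)
    simpa [hs0, B] using
      add_sub_mem_of_succ_sub_mem (fun n => mem_of_mem_nhds (hB.mem n)) hBadd hsB 0 n
  · have hlim : Tendsto (fun n => y - f (s n)) atTop (𝓝 (y - f x)) :=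
      (hf.continuousAt.tendsto.comp hx).const_sub y
    have hzero := tendsto_zero_of_mem_closure_image hf hB' hsy
    exact (sub_eq_zero.1 (tendsto_nhds_unique hlim hzero)).symm

theorem isOpenMap_of_surjective_of_barrelledSpace [Module ℝ E] [Module ℝ F] [UniformSpace E]
    [IsUniformAddGroup E] [ContinuousSMul ℝ E] [LocallyConvexSpace ℝ E] [CompleteSpace E]
    [FirstCountableTopology E] [TopologicalSpace F] [IsTopologicalAddGroup F]
    [ContinuousSMul ℝ F] [T2Space F] [BarrelledSpace ℝ F] {f : E →ₗ[ℝ] F}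
    (hf : Continuous f) (hsurj : Surjective f) : IsOpenMap f :=
  isOpenMap_of_closure_image_mem_nhds_zero (f := f.toAddMonoidHom) hf
    fun _ hV => closure_image_mem_nhds_zero_of_surjective hsurj hV

theorem isCountablyGenerated_uniformity_of_isOpenMap [TopologicalSpace E]
    [FirstCountableTopology E] [UniformSpace F] [IsUniformAddGroup F] {f : E →+ F}
    (hf : Continuous f) (hopen : IsOpenMap f) : (𝓤 F).IsCountablyGenerated := by
  have : (𝓝 (0 : F)).IsCountablyGenerated := by
    rw [← map_zero f, ← hopen.map_nhds_eq hf.continuousAt]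
    infer_instance
  exact IsUniformAddGroup.uniformity_countably_generated

theorem completeSpace_of_isOpenMap [UniformSpace E] [IsUniformAddGroup E] [CompleteSpace E]
    [FirstCountableTopology E] [UniformSpace F] [IsUniformAddGroup F] {f : E →+ F}
    (hf : Continuous f) (hopen : IsOpenMap f) (hsurj : Surjective f) : CompleteSpace F := by
  let e : E ⧸ f.ker ≃+ F := QuotientAddGroup.quotientKerEquivOfSurjective f hsurj
  have hmk := QuotientAddGroup.isOpenQuotientMap_mk (N := f.ker)
  have hcont : Continuous e := hmk.continuous_comp_iff.1 hf
  have hopen' : IsOpenMap e := hmk.isOpenMap_iff.2 hopen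
  let : UniformSpace (E ⧸ f.ker) := IsTopologicalAddGroup.rightUniformSpace _
  have : IsUniformAddGroup (E ⧸ f.ker) := isUniformAddGroup_of_addCommGroup
  have hinducing : IsUniformInducing e := AddMonoidHom.isUniformInducing_of_isInducing
    (IsOpenEmbedding.of_continuous_injective_isOpenMap hcont e.injective hopen').isInducing
  exact (hinducing.completeSpace_congr e.surjective).1
    (QuotientAddGroup.completeSpace_right E f.ker)

end OpenMapping

section FunctionSpaces

theorem continuous_of_forall_continuous_eval {E Y F : Type*} [AddCommGroup E] [Module ℝ E]
    [UniformSpace E] [IsUniformAddGroup E] [ContinuousSMul ℝ E] [BarrelledSpace ℝ E]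
    [TopologicalSpace Y] [NormedAddCommGroup F] [NormedSpace ℝ F] (f : E →ₗ[ℝ] C(Y, F))
    (hf : ∀ y, Continuous fun x => f x y) : Continuous f := by
  let evalAt (y : Y) : E →L[ℝ] F :=
    ⟨(LinearMap.proj y).comp ((ContinuousMap.coeFnLinearMap ℝ).comp f), hf y⟩
  refine continuous_iff_continuousAt.2 fun x =>
    ContinuousMap.tendsto_iff_forall_isCompact_tendstoUniformlyOn.2 fun K hK => ?_
  have hbdd : ∀ x, Bornology.IsVonNBounded ℝ (range fun y : K => evalAt y x) := fun x => by
    rw [← image_eq_range (fun y => evalAt y x) K, NormedSpace.isVonNBounded_iff]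
    exact (hK.image (f x).continuous).isBounded
  have hequi : UniformEquicontinuous ((↑) ∘ fun y : K => evalAt y) :=
    PolynormableSpace.banach_steinhaus hbdd
  intro u hu
  filter_upwards [hequi.equicontinuous x u hu] with x' hx' y hy using hx' ⟨y, hy⟩

theorem KOmegaSpace.compactlyCoherentSpace {X : Type*} [TopologicalSpace X] (hX : KOmegaSpace X) :
    CompactlyCoherentSpace X := by
  obtain ⟨K, hK, -, -, hclosed⟩ := hX
  refine .of_isClosed fun A hA => hclosed A fun n => ?_
  obtain ⟨F, hF, hFA⟩ := isClosed_induced_iff.1 (hA (K n) (hK n))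
  refine ⟨F, hF, ?_⟩
  rw [inter_comm A, inter_comm F]
  exact (Subtype.preimage_coe_eq_preimage_coe_iff.1 hFA).symm

theorem KOmegaSpace.hemicompact {X : Type*} [TopologicalSpace X] (hX : KOmegaSpace X) :
    Hemicompact X :=
  let ⟨K, hK, _, hcofinal, _⟩ := hX
  ⟨K, hK, hcofinal⟩

theorem Hemicompact.sigmaCompactSpace {X : Type*} [TopologicalSpace X] (hX : Hemicompact X) :
    SigmaCompactSpace X := by
  obtain ⟨K, hK, hcofinal⟩ := hX
  refine ⟨K, hK, eq_univ_of_forall fun x => ?_⟩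
  obtain ⟨n, hn⟩ := hcofinal {x} isCompact_singleton
  exact mem_iUnion.2 ⟨n, singleton_subset_iff.1 hn⟩

theorem Hemicompact.isCountablyGenerated_uniformity {X β : Type*} [TopologicalSpace X]
    [UniformSpace β] [(𝓤 β).IsCountablyGenerated] (hX : Hemicompact X) :
    (𝓤 C(X, β)).IsCountablyGenerated := by
  obtain ⟨K, hK, hcofinal⟩ := hX
  obtain ⟨U, hU⟩ := (𝓤 β).exists_antitone_basis
  refine HasCountableBasis.isCountablyGenerated (p := fun _ : ℕ × ℕ => True) (s := fun p =>
    {fg : C(X, β) × C(X, β) | ∀ x ∈ K p.1, (fg.1 x, fg.2 x) ∈ U p.2}) ⟨?_, to_countable _⟩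
  refine hU.toHasBasis.compactConvergenceUniformity.to_hasBasis ?_
    fun p _ => ⟨(K p.1, p.2), ⟨hK p.1, trivial⟩, subset_rfl⟩
  rintro ⟨C, i⟩ ⟨hC, -⟩
  obtain ⟨n, hn⟩ := hcofinal C hC
  exact ⟨(n, i), trivial, fun fg hfg x hx => hfg x (hn hx)⟩

instance instIsUniformAddGroupContinuousMap {X G : Type*} [TopologicalSpace X] [AddGroup G]
    [UniformSpace G] [IsUniformAddGroup G] : IsUniformAddGroup C(X, G) :=
  let toUniformOnFun : C(X, G) →+ (X →ᵤ[{K | IsCompact K}] G) :=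
    { toFun := ContinuousMap.toUniformOnFunIsCompact
      map_zero' := rfl
      map_add' := fun _ _ => rfl }
  ContinuousMap.isUniformEmbedding_toUniformOnFunIsCompact.isUniformInducing.isUniformAddGroup
    toUniformOnFun

theorem continuous_apply_of_continuous_ptTop {X Y : Type*} [TopologicalSpace X]
    [TopologicalSpace Y] {L : C(X, ℝ) → C(Y, ℝ)} (hL : @Continuous _ _ (ptTop X) (ptTop Y) L)
    (y : Y) : Continuous fun g => L g y := by
  have hle : ContinuousMap.compactOpen ≤ ptTop X :=
    continuous_iff_le_induced.1 (continuous_pi continuous_eval_const)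
  exact continuous_pi_iff.1 (continuous_le_dom hle (continuous_induced_rng.1 hL)) y

end FunctionSpaces

section NachbinShirota

theorem exists_isCompact_forall_eqOn_mem {X Z : Type*} [TopologicalSpace X] [TopologicalSpace Z]
    {f : C(X, Z)} {V : Set C(X, Z)} (hV : V ∈ 𝓝 f) :
    ∃ C, IsCompact C ∧ ∀ g : C(X, Z), EqOn g f C → g ∈ V := by
  obtain ⟨S, ⟨hS, hSf⟩, hSV⟩ := (ContinuousMap.hasBasis_nhds f).mem_iff.1 hV
  refine ⟨⋃ KU ∈ S, KU.1, hS.isCompact_biUnion fun KU hKU => (hSf _ _ hKU).1, fun g hg => ?_⟩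
  refine hSV (mem_iInter₂.2 fun KU hKU => (hSf _ _ hKU).2.2.congr ?_)
  exact (hg.mono (subset_biUnion_of_mem hKU)).symm

theorem mem_closure_of_forall_isCompact_eqOn {X Z : Type*} [TopologicalSpace X]
    [TopologicalSpace Z] {A : Set C(X, Z)} {f : C(X, Z)}
    (h : ∀ C : Set X, IsCompact C → ∃ g ∈ A, EqOn g f C) : f ∈ closure A := by
  refine mem_closure_iff_nhds.2 fun V hV => ?_
  obtain ⟨C, hC, hCV⟩ := exists_isCompact_forall_eqOn_mem hV
  obtain ⟨g, hgA, hgf⟩ := h C hC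
  exact ⟨g, hCV g hgf, hgA⟩

theorem exists_single_eq_zero_of_continuous {q : Seminorm ℝ (ℕ → ℝ)} (hq : Continuous q) :
    ∃ k, q (Pi.single k 1) = 0 := by
  by_contra! hne
  let v : ℕ → ℕ → ℝ := fun k => Pi.single k (q (Pi.single k 1))⁻¹
  have hv : ∀ k, q (v k) = 1 := fun k => by
    have hsmul : v k = (q (Pi.single k 1))⁻¹ • Pi.single k 1 := by
      rw [← Pi.single_smul, smul_eq_mul, mul_one]
    rw [hsmul, map_smul_eq_mul, norm_inv, Real.norm_of_nonneg (apply_nonneg q _),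
      inv_mul_cancel₀ (hne k)]
  have hlim : Tendsto v atTop (𝓝 0) := tendsto_pi_nhds.2 fun n =>
    tendsto_const_nhds.congr' <| by
      filter_upwards [eventually_gt_atTop n] with k hk
      simp [v, hk.ne]
  have := (hq.tendsto 0).comp hlim
  simp only [comp_def, hv, map_zero, tendsto_const_nhds_iff] at this
  exact one_ne_zero this

/-- The map `c ↦ ∑ₖ cₖ fₖ` attached to a locally finite family of continuous functions,
for the product topology on the coefficients and the compact-open topology on `C(Y, ℝ)`. -/
def locallyFiniteSum {ι Y : Type*} [TopologicalSpace Y] (f : ι → C(Y, ℝ))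
    (hf : LocallyFinite fun k => support (f k)) : (ι → ℝ) →L[ℝ] C(Y, ℝ) :=
  have hcont : Continuous fun cy : (ι → ℝ) × Y => ∑ᶠ k, cy.1 k * f k cy.2 :=
    continuous_finsum (fun _ => by fun_prop) <|
      (hf.preimage_continuous continuous_snd).subset fun _ => support_mul_subset_right _ _
  have hfin (c : ι → ℝ) (y : Y) : (support fun k => c k * f k y).Finite :=
    (hf.point_finite y).subset (support_mul_subset_right _ _)
  { toFun := fun c => ⟨fun y => ∑ᶠ k, c k * f k y, hcont.comp (.prodMk_right c)⟩
    map_add' := fun c d => ContinuousMap.ext fun y => by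
      simp only [Pi.add_apply, add_mul, ContinuousMap.coe_mk, ContinuousMap.add_apply]
      exact finsum_add_distrib (hfin c y) (hfin d y)
    map_smul' := fun a c => ContinuousMap.ext fun y => by
      simp only [Pi.smul_apply, smul_eq_mul, mul_assoc, ContinuousMap.coe_mk,
        ContinuousMap.smul_apply, RingHom.id_apply]
      exact (smul_finsum' a (hfin c y)).symm
    cont := ContinuousMap.continuous_of_continuous_uncurry _ hcont }

theorem locallyFiniteSum_single {ι Y : Type*} [DecidableEq ι] [TopologicalSpace Y]
    (f : ι → C(Y, ℝ)) (hf : LocallyFinite fun k => support (f k)) (k : ι) :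
    locallyFiniteSum f hf (Pi.single k 1) = f k := by
  ext y
  change ∑ᶠ j, Pi.single (M := fun _ => ℝ) k 1 j * f j y = f k y
  rw [finsum_eq_single _ k fun j hj => by simp [hj]]
  simp

variable {Y : Type*} [TopologicalSpace Y] {p : Seminorm ℝ C(Y, ℝ)}

theorem exists_eq_zero_of_locallyFinite (hp : LowerSemicontinuous p) {f : ℕ → C(Y, ℝ)}
    (hf : LocallyFinite fun k => support (f k)) : ∃ k, p (f k) = 0 := by
  let q := p.comp (locallyFiniteSum f hf).toLinearMap
  have hq : Continuous q := Seminorm.continuous_of_lowerSemicontinuous q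
    (hp.comp (locallyFiniteSum f hf).continuous)
  obtain ⟨k, hk⟩ := exists_single_eq_zero_of_continuous hq
  exact ⟨k, locallyFiniteSum_single f hf k ▸ hk⟩

/-- `U` is null for the seminorm `p` if `p` kills every function vanishing off `U`. -/
def IsSeminormNull (p : Seminorm ℝ C(Y, ℝ)) (U : Set Y) : Prop :=
  ∀ f : C(Y, ℝ), EqOn f 0 Uᶜ → p f = 0

/-- The support of a seminorm on `C(Y, ℝ)`: the complement of the union of the null open sets. -/
def seminormSupport (p : Seminorm ℝ C(Y, ℝ)) : Set Y :=
  (⋃₀ {U | IsOpen U ∧ IsSeminormNull p U})ᶜ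

theorem isClosed_seminormSupport : IsClosed (seminormSupport p) :=
  (isOpen_sUnion fun _ hU => hU.1).isClosed_compl

theorem not_isSeminormNull_of_mem_seminormSupport {y : Y} (hy : y ∈ seminormSupport p) {U : Set Y}
    (hU : IsOpen U) (hyU : y ∈ U) : ¬ IsSeminormNull p U :=
  fun hnull => hy ⟨U, ⟨hU, hnull⟩, hyU⟩

theorem locallyFinite_setOf_natCast_lt {f : Y → ℝ} (hf : Continuous f) :
    LocallyFinite fun k : ℕ => {y | (k : ℝ) < f y} := by
  intro y
  refine ⟨{z | f z < f y + 1}, (isOpen_lt hf continuous_const).mem_nhds (lt_add_one (f y)), ?_⟩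
  refine (finite_Iio ⌈f y + 1⌉₊).subset fun k ⟨z, hkz, hz⟩ => ?_
  exact Nat.lt_ceil.2 (lt_trans hkz hz)

theorem cBounded_seminormSupport (hp : LowerSemicontinuous p) :
    CBounded Y (seminormSupport p) := by
  intro F
  by_contra! hunbdd
  have hnull (k : ℕ) : ¬ IsSeminormNull p {y | (k : ℝ) < |F y|} := by
    obtain ⟨y, hy, hky⟩ := hunbdd k
    exact not_isSeminormNull_of_mem_seminormSupport hy
      (isOpen_lt continuous_const F.continuous.abs) hky
  simp only [IsSeminormNull, not_forall] at hnull
  choose f hf hpf using hnull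
  obtain ⟨k, hk⟩ := exists_eq_zero_of_locallyFinite hp <|
    (locallyFinite_setOf_natCast_lt F.continuous.abs).subset fun k y hy =>
      not_not.1 fun hyk => hy (hf k hyk)
  exact hpf k hk

theorem exists_eventually_eq_one_of_mem_isOpen [CompletelyRegularSpace Y] {x : Y} {U : Set Y}
    (hU : IsOpen U) (hx : x ∈ U) : ∃ h : C(Y, ℝ), (∀ᶠ y in 𝓝 x, h y = 1) ∧ EqOn h 0 Uᶜ := by
  obtain ⟨φ, hφ, hφx, hφU⟩ := CompletelyRegularSpace.completely_regular_isOpen x U hU hx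
  let h : C(Y, ℝ) := ⟨fun y => min (2 * (1 - φ y : ℝ)) 1, by fun_prop⟩
  refine ⟨h, ?_, fun y hy => by simp [h, hφU hy]⟩
  have hnear : ∀ᶠ y in 𝓝 x, (φ y : ℝ) < 1 / 2 :=
    (isOpen_lt (by fun_prop) continuous_const).mem_nhds (by simp [hφx])
  filter_upwards [hnear] with y hy
  exact min_eq_right (by linarith)

theorem exists_eqOn_one_of_isCompact_disjoint_seminormSupport [CompletelyRegularSpace Y]
    {D : Set Y} (hD : IsCompact D) (hDp : Disjoint D (seminormSupport p)) :
    ∃ h : C(Y, ℝ), EqOn h 1 D ∧ ∀ f, p (h * f) = 0 := by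
  refine hD.induction_on ⟨0, eqOn_empty _ _, by simp⟩ ?_ ?_ ?_
  · rintro s t hst ⟨h, hone, hph⟩
    exact ⟨h, hone.mono hst, hph⟩
  · rintro s t ⟨h, hhs, hph⟩ ⟨k, hkt, hpk⟩
    refine ⟨h + (1 - h) * k, ?_, fun f => ?_⟩
    · rintro y (hy | hy)
      · simp [hhs hy]
      · simp [hkt hy]
    · have hsum : (h + (1 - h) * k) * f = h * f + k * ((1 - h) * f) := by ring
      have hle : p ((h + (1 - h) * k) * f) ≤ 0 :=
        (hsum ▸ map_add_le_add p _ _).trans (by simp only [hph, hpk, add_zero, le_refl])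
      exact hle.antisymm (apply_nonneg p _)
  · intro x hx
    obtain ⟨U, ⟨hU, hnull⟩, hxU⟩ := not_not.1 (disjoint_left.1 hDp hx)
    obtain ⟨h, hone, hzero⟩ := exists_eventually_eq_one_of_mem_isOpen hU hxU
    exact ⟨_, mem_nhdsWithin_of_mem_nhds hone, h, fun y hy => hy,
      fun f => hnull _ fun y hy => by simp [hzero hy]⟩

theorem eq_zero_of_eqOn_zero_isOpen [CompletelyRegularSpace Y] (hp : LowerSemicontinuous p)
    {V : Set Y} (hV : IsOpen V) (hpV : seminormSupport p ⊆ V) {f : C(Y, ℝ)} (hf : EqOn f 0 V) :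
    p f = 0 := by
  suffices f ∈ closure {g | p g ≤ 0} from
    le_antisymm ((hp.isClosed_preimage 0).closure_subset this) (apply_nonneg p f)
  refine mem_closure_of_forall_isCompact_eqOn fun C hC => ?_
  obtain ⟨h, hone, hh⟩ := exists_eqOn_one_of_isCompact_disjoint_seminormSupport (hC.diff hV)
    (disjoint_sdiff_left.mono_right hpV)
  refine ⟨h * f, (hh f).le, fun y hy => ?_⟩
  by_cases hyV : y ∈ V
  · simp [hf hyV]
  · simp [hone ⟨hy, hyV⟩]

theorem exists_forall_le_mul_of_forall_abs_le (hp : LowerSemicontinuous p) :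
    ∃ M > 0, ∀ r ≥ 0, ∀ f : C(Y, ℝ), (∀ y, |f y| ≤ r) → p f ≤ M * r := by
  let J := BoundedContinuousFunction.toContinuousMapLinearMap Y ℝ ℝ
  have hJ : Continuous J := continuous_iff_continuousAt.2 fun f =>
    ContinuousMap.tendsto_iff_forall_isCompact_tendstoUniformlyOn.2 fun C _ =>
      (BoundedContinuousFunction.tendsto_iff_tendstoUniformly.1 tendsto_id).tendstoUniformlyOn
  obtain ⟨M, hM, hpM⟩ := (p.comp J).bound_of_continuous_normedSpace
    (Seminorm.continuous_of_lowerSemicontinuous _ (hp.comp hJ))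
  refine ⟨M, hM, fun r hr f hf => ?_⟩
  let F := BoundedContinuousFunction.ofNormedAddCommGroup f f.continuous r hf
  exact (hpM F).trans (mul_le_mul_of_nonneg_left
    (BoundedContinuousFunction.norm_ofNormedAddCommGroup_le _ hr _) hM.le)

theorem exists_forall_le_mul_of_forall_seminormSupport_abs_lt [CompletelyRegularSpace Y]
    (hp : LowerSemicontinuous p) : ∃ M > 0, ∀ r ≥ 0, ∀ f : C(Y, ℝ),
      (∀ y ∈ seminormSupport p, |f y| < r) → p f ≤ M * r := by
  obtain ⟨M, hM, hpM⟩ := exists_forall_le_mul_of_forall_abs_le hp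
  refine ⟨M, hM, fun r hr f hf => ?_⟩
  let clamp : C(Y, ℝ) := ⟨fun y => max (-r) (min r (f y)), by fun_prop⟩
  have hclamp : ∀ y, |clamp y| ≤ r := fun y =>
    abs_le.2 ⟨le_max_left _ _, max_le (by linarith) (min_le_left _ _)⟩
  have hdiff : p (f - clamp) = 0 := by
    refine eq_zero_of_eqOn_zero_isOpen hp (isOpen_lt f.continuous.abs continuous_const) hf ?_
    intro y hy
    obtain ⟨hlo, hhi⟩ := abs_lt.1 (show |f y| < r from hy)
    simp [clamp, min_eq_right hhi.le, max_eq_right hlo.le]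
  calc p f = p (clamp + (f - clamp)) := by rw [add_sub_cancel]
    _ ≤ p clamp + p (f - clamp) := map_add_le_add p _ _
    _ ≤ M * r := by rw [hdiff, add_zero]; exact hpM r hr clamp hclamp

theorem continuous_of_isCompact_seminormSupport [CompletelyRegularSpace Y]
    (hp : LowerSemicontinuous p) (hcompact : IsCompact (seminormSupport p)) : Continuous p := by
  obtain ⟨M, hM, hpM⟩ := exists_forall_le_mul_of_forall_seminormSupport_abs_lt hp
  refine Seminorm.continuous' (r := 1) ?_
  have hsmall : ∀ᶠ f : C(Y, ℝ) in 𝓝 0, MapsTo f (seminormSupport p) (Metric.ball 0 M⁻¹) :=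
    ContinuousMap.eventually_mapsTo hcompact Metric.isOpen_ball fun _ _ =>
      Metric.mem_ball_self (inv_pos.2 hM)
  filter_upwards [hsmall] with f hf
  have hle := hpM M⁻¹ (inv_pos.2 hM).le f fun y hy => by simpa using hf hy
  rw [Seminorm.mem_closedBall_zero]
  rwa [mul_inv_cancel₀ hM.ne'] at hle

theorem MuSpace.barrelledSpace [CompletelyRegularSpace Y] (hY : MuSpace Y) :
    BarrelledSpace ℝ C(Y, ℝ) where
  continuous_of_lowerSemicontinuous _ hp := continuous_of_isCompact_seminormSupport hp
    (hY _ isClosed_seminormSupport (cBounded_seminormSupport hp))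

end NachbinShirota

section KOmega

variable {Y : Type*} [TopologicalSpace Y]

theorem CBounded.exists_forall_exists_lt_ne_zero {B : Set Y} (hB : CBounded Y B)
    {f : ℕ → C(Y, ℝ)} (hf : ∀ y, ∃ n, f n y ≠ 0) : ∃ N, ∀ y ∈ B, ∃ n < N, f n y ≠ 0 := by
  let u : ℕ → Y → ℝ := fun n y => (1 / 2) ^ n * min |f n y| 1
  have hu_nonneg : ∀ n y, 0 ≤ u n y := fun n y => by positivity
  have hu_le : ∀ n y, ‖u n y‖ ≤ (1 / 2) ^ n := fun n y => by
    rw [Real.norm_of_nonneg (hu_nonneg n y)]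
    exact mul_le_of_le_one_right (by positivity) (min_le_right _ _)
  have hu_summable : ∀ y, Summable fun n => u n y := fun y =>
    .of_norm_bounded summable_geometric_two fun n => hu_le n y
  have hpos : ∀ y, 0 < ∑' n, u n y := fun y => by
    obtain ⟨n, hn⟩ := hf y
    exact (hu_summable y).tsum_pos (hu_nonneg · y) n
      (mul_pos (by positivity) (lt_min (abs_pos.2 hn) one_pos))
  have hcont : Continuous fun y => ∑' n, u n y :=
    continuous_tsum (fun n => by fun_prop) summable_geometric_two hu_le
  obtain ⟨M, hM⟩ := hB ⟨fun y => (∑' n, u n y)⁻¹, hcont.inv₀ fun y => (hpos y).ne'⟩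
  have hunif := Metric.tendstoUniformly_iff.1
    (tendstoUniformly_tsum_nat summable_geometric_two hu_le) (|M| + 1)⁻¹ (by positivity)
  obtain ⟨N, hN⟩ := hunif.exists
  refine ⟨N, fun y hy => ?_⟩
  by_contra! hzero
  have hpartial : ∑ n ∈ Finset.range N, u n y = 0 := Finset.sum_eq_zero fun n hn => by
    simp [u, hzero n (Finset.mem_range.1 hn)]
  have hsmall : ∑' n, u n y < (|M| + 1)⁻¹ := by
    simpa [hpartial, abs_of_pos (hpos y)] using hN y
  have hlarge : |M| + 1 < (∑' n, u n y)⁻¹ := (lt_inv_comm₀ (hpos y) (by positivity)).1 hsmall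
  have hbound : (∑' n, u n y)⁻¹ ≤ M := (le_abs_self _).trans (hM y hy)
  linarith [le_abs_self M]

theorem CBounded.exists_finite_subset_biUnion [CompletelyRegularSpace Y] [LindelofSpace Y]
    {B : Set Y} (hB : CBounded Y B) {W : Y → Set Y} (hW : ∀ y, W y ∈ 𝓝 y) :
    ∃ s : Set Y, s.Finite ∧ B ⊆ ⋃ y ∈ s, W y := by
  cases isEmpty_or_nonempty Y
  · exact ⟨∅, finite_empty, fun y => isEmptyElim y⟩
  choose f hfone hfzero using fun y =>
    exists_eventually_eq_one_of_mem_isOpen isOpen_interior (mem_interior_iff_mem_nhds.2 (hW y))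
  obtain ⟨s, hs, hcover⟩ := LindelofSpace.elim_nhds_subcover (fun y => support (f y)) fun y => by
    filter_upwards [hfone y] with z hz
    simp [hz]
  have hsne : s.Nonempty := 
    nonempty_iff_ne_empty.2 fun hempty => empty_ne_univ (by simpa [hempty] using hcover)
  obtain ⟨e, rfl⟩ := hs.exists_eq_range hsne
  obtain ⟨N, hN⟩ := hB.exists_forall_exists_lt_ne_zero (f := fun n => f (e n)) fun y => by
    simpa using hcover.ge (mem_univ y)
  refine ⟨e '' Iio N, (finite_Iio N).image e, fun y hy => ?_⟩
  obtain ⟨n, hn, hfn⟩ := hN y hy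
  refine mem_biUnion (mem_image_of_mem e hn) (interior_subset (not_not.1 fun hyW => hfn ?_))
  exact hfzero (e n) hyW

theorem muSpace_of_lindelofSpace [CompletelyRegularSpace Y] [LindelofSpace Y] : MuSpace Y := by
  intro B hBclosed hB f hf hfB
  by_contra! hnot
  have hW : ∀ y, ∃ W ∈ 𝓝 y, Wᶜ ∈ f := fun y => by
    by_cases hy : y ∈ B
    · obtain ⟨W, hW, t, ht, hdisj⟩ := Filter.disjoint_iff.1
        (disjoint_iff.2 (not_neBot.1 (hnot y hy)))
      exact ⟨W, hW, mem_of_superset ht hdisj.subset_compl_left⟩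
    · exact ⟨Bᶜ, hBclosed.isOpen_compl.mem_nhds hy, by simpa using hfB⟩
  choose W hW hWf using hW
  obtain ⟨s, hs, hBs⟩ := hB.exists_finite_subset_biUnion hW
  have hempty : (⋂ y ∈ s, (W y)ᶜ) ∩ B = ∅ := by
    simp only [← compl_iUnion]
    exact disjoint_iff_inter_eq_empty.1 (disjoint_compl_left_iff_subset.2 hBs)
  exact empty_notMem f (hempty ▸ inter_mem ((biInter_mem hs).2 fun y _ => hWf y)
    (le_principal_iff.1 hfB))
end KOmega

section CompactOpen

variable {Y : Type*} [TopologicalSpace Y]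

theorem hemicompact_of_isCountablyGenerated_nhds_zero [CompletelyRegularSpace Y]
    [(𝓝 (0 : C(Y, ℝ))).IsCountablyGenerated] : Hemicompact Y := by
  obtain ⟨V, hV⟩ := (𝓝 (0 : C(Y, ℝ))).exists_antitone_basis
  choose K hK hKV using fun n => exists_isCompact_forall_eqOn_mem (hV.mem n)
  refine ⟨fun n => closure (K n), fun n => (hK n).closure, fun C hC => ?_⟩
  have hC1 : {f : C(Y, ℝ) | MapsTo f C {1}ᶜ} ∈ 𝓝 0 :=
    ContinuousMap.eventually_mapsTo hC isOpen_compl_singleton fun y _ => zero_ne_one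
  obtain ⟨n, hn⟩ := hV.mem_iff.1 hC1
  refine ⟨n, fun y hyC => by_contra fun hy => ?_⟩
  obtain ⟨h, hone, hzero⟩ := exists_eventually_eq_one_of_mem_isOpen isClosed_closure.isOpen_compl hy
  have hK0 : EqOn h 0 (K n) := (compl_compl (closure (K n)) ▸ hzero).mono subset_closure
  exact hn (hKV n h hK0) hyC hone.self_of_nhds

theorem Hemicompact.exists_monotone_isClosed [R1Space Y] (hY : Hemicompact Y) :
    ∃ K : ℕ → Set Y, (∀ n, IsCompact (K n)) ∧ (∀ n, IsClosed (K n)) ∧ Monotone K ∧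
      ∀ C, IsCompact C → ∃ n, C ⊆ K n := by
  obtain ⟨K, hK, hcofinal⟩ := hY
  refine ⟨fun n => closure (accumulate K n), fun n => (isCompact_accumulate hK n).closure,
    fun n => isClosed_closure, fun m n hmn => closure_mono (monotone_accumulate hmn), ?_⟩
  intro C hC
  obtain ⟨n, hn⟩ := hcofinal C hC
  exact ⟨n, hn.trans (subset_accumulate.trans subset_closure)⟩

theorem exists_eqOn_of_succ_eqOn {β : Type*} [UniformSpace β] [T2Space β]
    [CompleteSpace C(Y, β)] {K : ℕ → Set Y} (hmono : Monotone K)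
    (hcofinal : ∀ C, IsCompact C → ∃ n, C ⊆ K n) {φ : ℕ → C(Y, β)}
    (hφ : ∀ n, EqOn (φ (n + 1)) (φ n) (K n)) : ∃ g : C(Y, β), ∀ n, EqOn g (φ n) (K n) := by
  have hstable : ∀ m n, m ≤ n → EqOn (φ n) (φ m) (K m) := fun m n hmn => by
    induction n, hmn using Nat.le_induction with
    | base => exact eqOn_refl _ _
    | succ n hmn ih => exact ((hφ n).mono (hmono hmn)).trans ih
  have hcauchy : CauchySeq φ := by
    refine (𝓤 β).basis_sets.compactConvergenceUniformity.cauchySeq_iff'.2 fun ⟨C, V⟩ ⟨hC, hV⟩ => ?_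
    obtain ⟨N, hN⟩ := hcofinal C hC
    exact ⟨N, fun n hn y hy => (hstable N n hn (hN hy)) ▸ refl_mem_uniformity hV⟩
  obtain ⟨g, hg⟩ := cauchySeq_tendsto_of_complete hcauchy
  refine ⟨g, fun n y hy => ?_⟩
  have hlim : Tendsto (fun m => φ m y) atTop (𝓝 (g y)) :=
    ((continuous_eval_const y).tendsto g).comp hg
  refine tendsto_nhds_unique_of_eventuallyEq hlim tendsto_const_nhds ?_
  filter_upwards [eventually_ge_atTop n] with m hm using hstable n m hm hy

theorem exists_continuousMap_eqOn_eqOn_zero [NormalSpace Y] {F S : Set Y} (hF : IsClosed F)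
    (hS : IsClosed S) {φ : C(Y, ℝ)} (hφ : EqOn φ 0 (S ∩ F)) :
    ∃ ψ : C(Y, ℝ), EqOn ψ φ F ∧ EqOn ψ 0 S := by
  let g : Y → ℝ := F.indicator φ
  have hgF : EqOn g φ F := fun y hy => indicator_of_mem hy φ
  have hgS : EqOn g 0 S := fun y hy => by
    by_cases hyF : y ∈ F
    · exact (hgF hyF).trans (hφ ⟨hy, hyF⟩)
    · exact indicator_of_notMem hyF φ
  have hcont : ContinuousOn g (F ∪ S) :=
    (φ.continuous.continuousOn.congr hgF).union_of_isClosed (continuousOn_const.congr hgS) hF hS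
  obtain ⟨ψ, hψ⟩ := ContinuousMap.exists_restrict_eq (hF.union hS) ⟨_, hcont.domRestrict⟩
  have hψg : EqOn ψ g (F ∪ S) := fun y hy => DFunLike.congr_fun hψ ⟨y, hy⟩
  exact ⟨ψ, (hψg.mono subset_union_left).trans hgF, (hψg.mono subset_union_right).trans hgS⟩

theorem exists_continuousMap_eqOn_zero_of_isClosed_inter [NormalSpace Y] [CompleteSpace C(Y, ℝ)]
    {K : ℕ → Set Y} (hclosed : ∀ n, IsClosed (K n)) (hmono : Monotone K)
    (hcofinal : ∀ C, IsCompact C → ∃ n, C ⊆ K n) {A : Set Y} (hA : ∀ n, IsClosed (A ∩ K n))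
    {φ₀ : C(Y, ℝ)} (hφ₀ : EqOn φ₀ 0 (A ∩ K 0)) :
    ∃ g : C(Y, ℝ), EqOn g 0 A ∧ EqOn g φ₀ (K 0) := by
  have hext (n : ℕ) (φ : C(Y, ℝ)) (hφ : EqOn φ 0 (A ∩ K n)) :
      ∃ ψ : C(Y, ℝ), EqOn ψ φ (K n) ∧ EqOn ψ 0 (A ∩ K (n + 1)) :=
    exists_continuousMap_eqOn_eqOn_zero (hclosed n) (hA (n + 1)) <|
      hφ.mono (inter_subset_inter_left _ inter_subset_left)
  choose! ext hext_eq hext_zero using hext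
  let φ : ℕ → C(Y, ℝ) := fun n => Nat.rec φ₀ ext n
  have hzero : ∀ n, EqOn (φ n) 0 (A ∩ K n) := fun n => by
    induction n with
    | zero => exact hφ₀
    | succ n ih => exact hext_zero n _ ih
  obtain ⟨g, hg⟩ := exists_eqOn_of_succ_eqOn hmono hcofinal (φ := φ) fun n =>
    hext_eq n (φ n) (hzero n)
  refine ⟨g, fun y hy => ?_, hg 0⟩
  obtain ⟨n, hn⟩ := hcofinal {y} isCompact_singleton
  have hyn : y ∈ K n := hn rfl
  exact (hg n hyn).trans (hzero n ⟨hy, hyn⟩)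

theorem isClosed_of_forall_isClosed_inter [CompletelyRegularSpace Y] [NormalSpace Y]
    [CompleteSpace C(Y, ℝ)] {K : ℕ → Set Y} (hclosed : ∀ n, IsClosed (K n)) (hmono : Monotone K)
    (hcofinal : ∀ C, IsCompact C → ∃ n, C ⊆ K n) {A : Set Y} (hA : ∀ n, IsClosed (A ∩ K n)) :
    IsClosed A := by
  refine isClosed_of_closure_subset fun y hy => by_contra fun hyA => ?_
  obtain ⟨N, hN⟩ := hcofinal {y} isCompact_singleton
  obtain ⟨φ₀, hone, hzero⟩ := exists_eventually_eq_one_of_mem_isOpen (hA N).isOpen_compl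
    fun hyN => hyA hyN.1
  obtain ⟨g, hgA, hgφ⟩ := exists_continuousMap_eqOn_zero_of_isClosed_inter
    (K := fun n => K (N + n)) (fun n => hclosed _) (fun m n hmn => hmono (by lia))
    (fun C hC => (hcofinal C hC).imp fun n hn => hn.trans (hmono (by lia))) (fun n => hA _)
    (φ₀ := φ₀) (by simpa only [compl_compl, add_zero] using hzero)
  have hg0 : g y = 0 := closure_minimal hgA (isClosed_eq g.continuous continuous_const) hy
  exact one_ne_zero (hone.self_of_nhds.symm.trans ((hgφ (hN rfl)).symm.trans hg0))

theorem Hemicompact.kOmegaSpace [CompletelyRegularSpace Y] [CompleteSpace C(Y, ℝ)]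
    (hY : Hemicompact Y) : KOmegaSpace Y := by
  have := hY.sigmaCompactSpace
  obtain ⟨K, hK, hclosed, hmono, hcofinal⟩ := hY.exists_monotone_isClosed
  refine ⟨K, hK, fun n => hmono n.le_succ, hcofinal, fun A hA => ?_⟩
  refine isClosed_of_forall_isClosed_inter hclosed hmono hcofinal fun n => ?_
  obtain ⟨F, hF, hAF⟩ := hA n
  exact hAF ▸ hF.inter (hclosed n)

end CompactOpen

section EllDomination

variable {X Y : Type*} [TopologicalSpace X] [TopologicalSpace Y]

theorem KOmegaSpace.muSpace [CompletelyRegularSpace Y] (hY : KOmegaSpace Y) : MuSpace Y := by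
  have := hY.hemicompact.sigmaCompactSpace
  exact muSpace_of_lindelofSpace

theorem kOmegaSpace_of_isOpenMap [CompletelyRegularSpace Y] {E : Type*} [AddCommGroup E]
    [UniformSpace E] [IsUniformAddGroup E] [CompleteSpace E] [FirstCountableTopology E]
    {L : E →+ C(Y, ℝ)} (hL : Continuous L) (hopen : IsOpenMap L) (hsurj : Surjective L) :
    KOmegaSpace Y := by
  have := completeSpace_of_isOpenMap hL hopen hsurj
  have := isCountablyGenerated_uniformity_of_isOpenMap hL hopen
  exact hemicompact_of_isCountablyGenerated_nhds_zero.kOmegaSpace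

theorem kOmega_iff_muSpace_of_ellDominated_general [CompletelyRegularSpace Y]
    (h : LDominates X Y) (hX : KOmegaSpace X) : KOmegaSpace Y ↔ MuSpace Y := by
  refine ⟨KOmegaSpace.muSpace, fun hY => ?_⟩
  obtain ⟨L, hL, hsurj⟩ := h
  have := hX.compactlyCoherentSpace
  have := hX.hemicompact.isCountablyGenerated_uniformity (β := ℝ)
  have := hY.barrelledSpace
  have hcont : Continuous L :=
    continuous_of_forall_continuous_eval L (continuous_apply_of_continuous_ptTop hL)
  exact kOmegaSpace_of_isOpenMap (L := L.toAddMonoidHom) hcont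
    (isOpenMap_of_surjective_of_barrelledSpace hcont hsurj) hsurj

end EllDomination

/-- if a k_ω Tychonoff space ℓ-dominates `Y`, then `Y` is k_ω iff `Y`
is a μ-space. -/
theorem kOmega_iff_muSpace_of_ellDominated
    (X Y : Type*) [TopologicalSpace X] [T35Space X] [TopologicalSpace Y] [T35Space Y]
    (h : LDominates X Y) (hX : KOmegaSpace X) :
    KOmegaSpace Y ↔ MuSpace Y :=
  kOmega_iff_muSpace_of_ellDominated_general h hX

end
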